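/- arXiv:1309.4415 — 3 statements merged into one kernel-verified Lean document; each statement's English description precedes it below -/
import Mathlib

section
/- Let P = Σ_{i=0}^n M_{p_i} ∘ D^i be an element of W with n ≥ 1 whose leading coefficient p_n is a nonzero constant polynomial. Then the centralizer C_W(P) = { Q ∈ W : P∘Q = Q∘P } is a free module over the subalgebra ℂ[P] of W generated by P, with a basis containing at most n elements. -/
noncomputable section

/-- The formal differentiation operator on `ℂ[y]` as a ℂ-linear endomorphism. -/
def D : Module.End ℂ (Polynomial ℂ) := Polynomial.derivative

/-- The multiplication operator `M f : g ↦ f * g` on `ℂ[y]`. -/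
def M : Polynomial ℂ → Module.End ℂ (Polynomial ℂ) :=
  fun f => LinearMap.mul ℂ (Polynomial ℂ) f

/-- The Weyl algebra `W`: the ℂ-subalgebra of `End_ℂ(ℂ[y])` generated by `D`
together with all multiplication operators `M f`, `f ∈ ℂ[y]`. -/
def W : Subalgebra ℂ (Module.End ℂ (Polynomial ℂ)) := Algebra.adjoin ℂ ({D} ∪ Set.range M)

namespace WeylAux

open Finset

abbrev A := Module.End ℂ (Polynomial ℂ)

/-- The commutator with multiplication by the variable. -/
def ad : A →ₗ[ℂ] A := LinearMap.mulRight ℂ (M Polynomial.X) - LinearMap.mulLeft ℂ (M Polynomial.X)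

lemma ad_apply (Q : A) : ad Q = Q * M Polynomial.X - M Polynomial.X * Q := rfl

lemma ad_mul (Q R : A) : ad (Q * R) = ad Q * R + Q * ad R := by
  simp only [ad_apply, sub_mul, mul_sub, mul_assoc]; abel

lemma ad_pow_succ (k : ℕ) (Q : A) : (ad ^ (k + 1)) Q = ad ((ad ^ k) Q) := by
  rw [pow_succ']; rfl

lemma leibniz (n : ℕ) (a b : A) :
    (ad ^ n) (a * b) =
      ∑ ij ∈ antidiagonal n, n.choose ij.1 • ((ad ^ ij.1) a * (ad ^ ij.2) b) := by
  induction n with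
  | zero => simp
  | succ n ih =>
    rw [sum_antidiagonal_choose_succ_nsmul (M := A) (fun i j => (ad ^ i) a * (ad ^ j) b) n]
    simp only [ad_pow_succ, ih, map_sum, map_nsmul, ad_mul, smul_add, sum_add_distrib]
    rw [add_comm]
    congr 1
    refine sum_congr rfl fun ⟨i, j⟩ hij ↦ ?_
    rw [n.choose_symm_of_eq_add (mem_antidiagonal.1 hij).symm]

lemma ad_zero_of_le {k l : ℕ} {Q : A} (h : (ad ^ k) Q = 0) (hl : k ≤ l) : (ad ^ l) Q = 0 := by
  obtain ⟨d, rfl⟩ := Nat.exists_eq_add_of_le' hl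
  rw [pow_add, Module.End.mul_apply, h, map_zero]

lemma ad_one : ad 1 = 0 := by simp [ad_apply]

lemma ad_M (f : Polynomial ℂ) : ad (M f) = 0 := by
  rw [ad_apply, sub_eq_zero]
  refine LinearMap.ext fun g => ?_
  simp only [M, Module.End.mul_apply, LinearMap.mul_apply']
  ring

lemma ad_D : ad D = 1 := by
  rw [ad_apply]
  refine LinearMap.ext fun g => ?_
  simp [M, D]

/-- An operator commuting with the variable is a multiplication operator. -/
lemma eq_M_of_ad {Q : A} (h : ad Q = 0) : Q = M (Q 1) := by
  rw [ad_apply, sub_eq_zero] at h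
  have h' : ∀ g, Q (Polynomial.X * g) = Polynomial.X * Q g := fun g => by
    simpa [M] using LinearMap.congr_fun h g
  have h2 : ∀ i : ℕ, Q (Polynomial.X ^ i) = Polynomial.X ^ i * Q 1 := by
    intro i
    induction i with
    | zero => simp
    | succ k ih => rw [pow_succ', h', ih, mul_assoc]
  refine LinearMap.ext fun g => ?_
  change Q g = Q 1 * g
  induction g using Polynomial.induction_on' with
  | add p q hp hq => rw [map_add, hp, hq, mul_add]
  | monomial k a =>
    rw [← Polynomial.C_mul_X_pow_eq_monomial, ← Polynomial.smul_eq_C_mul, map_smul, h2,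
      mul_smul_comm, mul_comm]

lemma D_M (f : Polynomial ℂ) : D * M f - M f * D = M (Polynomial.derivative f) := by
  refine LinearMap.ext fun g => ?_
  simp [M, D]

/-- `Q` has order exactly `m`, with constant leading coefficient. -/
def E (Q : A) (m : ℕ) : Prop := ∃ l : ℂ, l ≠ 0 ∧ (ad ^ m) Q = l • (1 : A)

lemma zero_of_lt {Q : A} {m k : ℕ} {l : ℂ} (h : (ad ^ m) Q = l • (1 : A)) (hk : m < k) :
    (ad ^ k) Q = 0 := by
  refine ad_zero_of_le (k := m + 1) ?_ hk
  rw [ad_pow_succ, h, map_smul, ad_one, smul_zero]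

lemma E.mul {Q R : A} {m k : ℕ} (hQ : E Q m) (hR : E R k) : E (Q * R) (m + k) := by
  obtain ⟨a, ha, hQ⟩ := hQ
  obtain ⟨b, hb, hR⟩ := hR
  refine ⟨((m + k).choose m : ℂ) * (a * b), ?_, ?_⟩
  · have : ((m + k).choose m : ℂ) ≠ 0 := by
      exact_mod_cast (Nat.choose_pos (Nat.le_add_right m k)).ne'
    positivity
  · rw [leibniz, sum_eq_single (m, k)]
    · simp only [hQ, hR]
      rw [smul_mul_smul_comm, mul_one, mul_smul (Nat.cast _ : ℂ) (a * b), Nat.cast_smul_eq_nsmul]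
    · rintro ⟨i, j⟩ hij hne
      rw [HasAntidiagonal.mem_antidiagonal] at hij
      simp only at hij ⊢
      rcases lt_trichotomy i m with h | h | h
      · rw [zero_of_lt hR (k := j) (by omega), mul_zero, smul_zero]
      · exact absurd (by ext <;> simp <;> omega) hne
      · rw [zero_of_lt hQ h, zero_mul, smul_zero]
    · intro h; simp at h

lemma E.zero_of_lt {Q : A} {m k : ℕ} (hQ : E Q m) (h : m < k) : (ad ^ k) Q = 0 := by
  obtain ⟨a, ha, hQ⟩ := hQ
  exact WeylAux.zero_of_lt hQ h

lemma E_one : E 1 0 := ⟨1, one_ne_zero, by simp⟩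

lemma E.pow {Q : A} {m : ℕ} (hQ : E Q m) (k : ℕ) : E (Q ^ k) (m * k) := by
  induction k with
  | zero => simpa using E_one
  | succ k ih => rw [pow_succ, mul_add, mul_one]; exact ih.mul hQ

lemma E.aeval {P : A} {n : ℕ} (hn : 1 ≤ n) (hP : E P n) {g : Polynomial ℂ} (hg : g ≠ 0) :
    E (Polynomial.aeval P g) (n * g.natDegree) := by
  obtain ⟨a, ha, h⟩ := hP.pow g.natDegree
  refine ⟨g.leadingCoeff * a, mul_ne_zero (by simpa using hg) ha, ?_⟩
  rw [Polynomial.aeval_eq_sum_range, map_sum, sum_range_succ, sum_eq_zero, zero_add, map_smul, h,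
    smul_smul, Polynomial.leadingCoeff]
  intro i hi
  rw [map_smul, (hP.pow i).zero_of_lt, smul_zero]
  exact Nat.mul_lt_mul_of_pos_left (mem_range.1 hi) hn

lemma nilp {Q : A} (hQ : Q ∈ W) : ∃ k, (ad ^ k) Q = 0 := by
  refine Algebra.adjoin_induction (p := fun Q _ => ∃ k, (ad ^ k) Q = 0) ?_ ?_ ?_ ?_ hQ
  · rintro Q (rfl | ⟨f, rfl⟩)
    · exact ⟨2, by rw [ad_pow_succ, pow_one, ad_D, ad_one]⟩
    · exact ⟨1, by rw [pow_one, ad_M]⟩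
  · intro r
    exact ⟨1, by rw [pow_one, Algebra.algebraMap_eq_smul_one, map_smul, ad_one, smul_zero]⟩
  · rintro a b - - ⟨k, hk⟩ ⟨l, hl⟩
    exact ⟨k + l, by rw [map_add, ad_zero_of_le hk (by omega), ad_zero_of_le hl (by omega),
      add_zero]⟩
  · rintro a b - - ⟨k, hk⟩ ⟨l, hl⟩
    refine ⟨k + l, ?_⟩
    rw [leibniz]
    refine sum_eq_zero ?_
    rintro ⟨i, j⟩ hij
    rw [HasAntidiagonal.mem_antidiagonal] at hij
    simp only at hij ⊢
    rcases le_or_gt k i with h | h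
    · rw [ad_zero_of_le hk h, zero_mul, smul_zero]
    · rw [ad_zero_of_le hl (l := j) (by omega), mul_zero, smul_zero]

lemma comm_leibniz (n : ℕ) (a b : A) :
    (ad ^ n) (a * b - b * a) =
      ∑ ij ∈ antidiagonal n, n.choose ij.1 •
        ((ad ^ ij.1) a * (ad ^ ij.2) b - (ad ^ ij.2) b * (ad ^ ij.1) a) := by
  rw [map_sub, leibniz, leibniz n b a, ← Finset.Nat.sum_antidiagonal_swap (n := n)
    (f := fun ij => n.choose ij.1 • ((ad ^ ij.1) b * (ad ^ ij.2) a)), ← sum_sub_distrib]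
  refine sum_congr rfl ?_
  rintro ⟨i, j⟩ hij
  simp only [Prod.swap]
  rw [n.choose_symm_of_eq_add (mem_antidiagonal.1 hij).symm, smul_sub]

lemma exists_E {P : A} {n : ℕ} (hn : 1 ≤ n) (hP : E P n) {Q : A} (hQ : Q ∈ W)
    (hc : P * Q = Q * P) (h0 : Q ≠ 0) : ∃ m, E Q m := by
  classical
  have hex := nilp hQ
  obtain ⟨m, hm⟩ : ∃ m, Nat.find hex = m + 1 := by
    refine Nat.exists_eq_succ_of_ne_zero fun h => h0 ?_
    have := Nat.find_spec hex
    rw [h] at this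
    simpa using this
  have hm1 : (ad ^ (m + 1)) Q = 0 := hm ▸ Nat.find_spec hex
  have hm0 : (ad ^ m) Q ≠ 0 := Nat.find_min hex (by omega)
  obtain ⟨c, hc0, hPc⟩ := hP
  obtain ⟨k, rfl⟩ := Nat.exists_eq_add_of_le' hn
  have key := comm_leibniz (k + m) P Q
  rw [hc, sub_self, map_zero, sum_eq_single (k, m)] at key
  rotate_left
  · rintro ⟨i, j⟩ hij hne
    rw [HasAntidiagonal.mem_antidiagonal] at hij
    simp only at hij ⊢
    rcases lt_trichotomy i k with h | h | h
    · rw [ad_zero_of_le hm1 (l := j) (by omega)]; simp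
    · exact absurd (by ext <;> simp <;> omega) hne
    · rcases Nat.lt_or_ge (k + 1) i with h' | h'
      · rw [zero_of_lt hPc h']; simp
      · obtain rfl : i = k + 1 := by omega
        rw [hPc]; simp
  · intro h; simp at h
  simp only at key
  have hch : (k + m).choose k ≠ 0 := (Nat.choose_pos (Nat.le_add_right k m)).ne'
  have key2 := (smul_eq_zero.1 key.symm).resolve_left hch
  have h1 : (ad ^ k) P - c • D = M (((ad ^ k) P - c • D) 1) := by
    apply eq_M_of_ad
    rw [map_sub, map_smul, ad_D, ← ad_pow_succ, hPc, sub_self]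
  have h2 : (ad ^ m) Q = M ((ad ^ m) Q 1) := by
    apply eq_M_of_ad
    rw [← ad_pow_succ, hm1]
  set f := ((ad ^ k) P - c • D) 1
  set q := (ad ^ m) Q 1 with hq
  rw [sub_eq_iff_eq_add] at h1
  have hMM : M f * M q = M q * M f := by
    refine LinearMap.ext fun g => ?_
    simp only [M, Module.End.mul_apply, LinearMap.mul_apply']
    ring
  have h3 : c • M (Polynomial.derivative q) = 0 := by
    rw [← D_M, ← key2, h1, h2, add_mul, mul_add, hMM, smul_sub, smul_mul_assoc, mul_smul_comm]
    abel
  have h4 := LinearMap.congr_fun ((smul_eq_zero.1 h3).resolve_left hc0) 1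
  have h5 : Polynomial.derivative q = 0 := by simpa [M] using h4
  have h6 := Polynomial.eq_C_of_derivative_eq_zero h5
  refine ⟨m, q.coeff 0, ?_, ?_⟩
  · intro h
    apply hm0
    rw [h2, h6, h]
    refine LinearMap.ext fun g => ?_
    simp [M]
  · rw [h2, h6]
    refine LinearMap.ext fun g => ?_
    simp [M, Polynomial.smul_eq_C_mul]

lemma ad_pow_D (k : ℕ) : ad (D ^ k) = k • D ^ (k - 1) := by
  induction k with
  | zero => simp [ad_one]
  | succ k ih =>
    rw [pow_succ, ad_mul, ih, ad_D]
    rcases k with _ | k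
    · simp
    · simp only [Nat.add_sub_cancel, smul_mul_assoc, ← pow_succ, mul_one]
      rw [add_smul (k + 1) 1, one_smul]

lemma ad_MD (f : Polynomial ℂ) (k : ℕ) : (ad ^ k) (M f * D ^ k) = k.factorial • M f := by
  induction k with
  | zero => simp
  | succ k ih =>
    rw [pow_succ, Module.End.mul_apply, ad_mul, ad_M, ad_pow_D, zero_mul, zero_add, mul_smul_comm,
      map_nsmul, Nat.add_sub_cancel, ih, smul_smul, Nat.factorial_succ]

lemma E_P (n : ℕ) (p : Fin (n + 1) → Polynomial ℂ) (c : ℂ) (hc : c ≠ 0)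
    (hpn : p (Fin.last n) = Polynomial.C c) :
    E (∑ i : Fin (n + 1), M (p i) * D ^ (i : ℕ)) n := by
  refine ⟨(n.factorial : ℂ) * c, mul_ne_zero (by exact_mod_cast n.factorial_ne_zero) hc, ?_⟩
  rw [Fin.sum_univ_castSucc, map_add, map_sum, sum_eq_zero, zero_add, Fin.val_last, ad_MD, hpn,
    mul_smul, Nat.cast_smul_eq_nsmul]
  · congr 1
    refine LinearMap.ext fun g => ?_
    simp [M, Polynomial.smul_eq_C_mul]
  · intro i _
    refine ad_zero_of_le (k := i + 1) ?_ i.2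
    rw [ad_pow_succ, Fin.val_castSucc, ad_MD, map_nsmul, ad_M, smul_zero]

end WeylAux

/-- The centralizer in `W` of an operator `P = Σ_{i=0}^n M_{p i} ∘ D^i`, `n ≥ 1`, with
nonzero constant leading coefficient, is a free `ℂ[P]`-module on at most `n` generators. -/
theorem weyl_centralizer_free (n : ℕ) (hn : 1 ≤ n)
    (p : Fin (n + 1) → Polynomial ℂ) (c : ℂ) (hc : c ≠ 0)
    (hpn : p (Fin.last n) = Polynomial.C c)
    (P : Module.End ℂ (Polynomial ℂ))
    (hP : P = ∑ i : Fin (n + 1), M (p i) * D ^ (i : ℕ)) :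
    ∃ (r : ℕ) (b : Fin r → Module.End ℂ (Polynomial ℂ)), r ≤ n ∧
      (∀ i, b i ∈ W ∧ P * b i = b i * P) ∧
      (∀ Q, Q ∈ W → P * Q = Q * P →
        ∃ g : Fin r → Polynomial ℂ, Q = ∑ i, Polynomial.aeval P (g i) * b i) ∧
      (∀ g : Fin r → Polynomial ℂ,
        ∑ i, Polynomial.aeval P (g i) * b i = 0 → ∀ i, Polynomial.aeval P (g i) = 0) := by
  classical
  have hPE : WeylAux.E P n := hP ▸ WeylAux.E_P n p c hc hpn
  have hDW : D ∈ W := Algebra.subset_adjoin (Or.inl rfl)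
  have hMW : ∀ f, M f ∈ W := fun f => Algebra.subset_adjoin (Or.inr ⟨f, rfl⟩)
  have hPW : P ∈ W := by
    rw [hP]
    exact sum_mem fun i _ => mul_mem (hMW _) (pow_mem hDW _)
  clear hP hpn
  -- the set of orders in the centralizer
  let O : ℕ → Prop := fun m => ∃ Q, Q ∈ W ∧ P * Q = Q * P ∧ WeylAux.E Q m
  let S : Finset (Fin n) := Finset.univ.filter fun j => ∃ m, O m ∧ m % n = j
  have hS : ∀ j : S, ∃ m, O m ∧ m % n = (j : Fin n) := fun j => (Finset.mem_filter.1 j.2).2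
  let e : Fin S.card ≃ S := S.equivFin.symm
  let o : Fin S.card → ℕ := fun i => Nat.find (hS (e i))
  have ho : ∀ i, O (o i) ∧ o i % n = (e i : Fin n) := fun i => Nat.find_spec (hS (e i))
  have hmin : ∀ i m, O m → m % n = (e i : Fin n) → o i ≤ m :=
    fun i m h1 h2 => Nat.find_min' (hS (e i)) ⟨h1, h2⟩
  have hinj : ∀ i j, o i % n = o j % n → i = j := by
    intro i j h
    rw [(ho i).2, (ho j).2] at h
    exact e.injective (Subtype.ext (Fin.ext h))
  choose b hbW hbP hbE using fun i => (ho i).1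
  refine ⟨S.card, b, ?_, fun i => ⟨hbW i, hbP i⟩, ?_, ?_⟩
  · simpa using Finset.card_le_univ S
  · have main : ∀ m Q, Q ∈ W → P * Q = Q * P → (WeylAux.ad ^ m) Q = 0 →
        ∃ g : Fin S.card → Polynomial ℂ, Q = ∑ i, Polynomial.aeval P (g i) * b i := by
      intro m
      induction m using Nat.strong_induction_on with
      | _ m ih =>
        intro Q hQ hQP hm
        by_cases h0 : Q = 0
        · exact ⟨0, by simp [h0]⟩
        obtain ⟨d, hd⟩ := WeylAux.exists_E hn hPE hQ hQP h0
        have hO : O d := ⟨Q, hQ, hQP, hd⟩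
        obtain ⟨l, hl, hdl⟩ := hd
        have hdm : d < m := by
          by_contra hlt
          have := WeylAux.ad_zero_of_le hm (not_lt.1 hlt)
          rw [hdl] at this
          exact hl ((smul_eq_zero.1 this).resolve_right one_ne_zero)
        let j : Fin n := ⟨d % n, Nat.mod_lt _ hn⟩
        have hj : j ∈ S := Finset.mem_filter.2 ⟨Finset.mem_univ _, d, hO, rfl⟩
        obtain ⟨i, hi⟩ := e.surjective ⟨j, hj⟩
        have hi' : d % n = (e i : Fin n) := by rw [hi]
        have hle := hmin i d hO hi'
        obtain ⟨k, hk⟩ : n ∣ d - o i :=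
          (Nat.modEq_iff_dvd' hle).1 ((ho i).2.trans hi'.symm)
        obtain ⟨u, hu, hPu⟩ := (hPE.pow k).mul (hbE i)
        have hd2 : n * k + o i = d := by omega
        rw [hd2] at hPu
        have hcomm : P * (P ^ k * b i) = P ^ k * b i * P := by
          rw [← mul_assoc, ← pow_succ', pow_succ, mul_assoc, hbP, mul_assoc]
        obtain ⟨g, hg⟩ := ih d hdm (Q - (l / u) • (P ^ k * b i))
          (sub_mem hQ (W.smul_mem (mul_mem (pow_mem hPW k) (hbW i)) _))
          (by rw [mul_sub, sub_mul, mul_smul_comm, smul_mul_assoc, hcomm, hQP])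
          (by rw [map_sub, map_smul, hPu, hdl, smul_smul, div_mul_cancel₀ _ hu, sub_self])
        refine ⟨g + Pi.single i (Polynomial.C (l / u) * Polynomial.X ^ k), ?_⟩
        simp only [Pi.add_apply, map_add, add_mul, Finset.sum_add_distrib]
        rw [← hg, Finset.sum_eq_single i]
        · rw [Pi.single_eq_same, map_mul, Polynomial.aeval_C, map_pow, Polynomial.aeval_X,
            Algebra.algebraMap_eq_smul_one, smul_mul_assoc, one_mul, smul_mul_assoc,
            sub_add_cancel]
        · intro i' _ hne
          rw [Pi.single_eq_of_ne hne, map_zero, zero_mul]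
        · simp
    intro Q hQ hQP
    obtain ⟨m, hm⟩ := WeylAux.nilp hQ
    exact main m Q hQ hQP hm
  · intro g hg
    suffices hall : ∀ i, g i = 0 by
      intro i; rw [hall i, map_zero]
    by_contra hne
    push Not at hne
    let T : Finset (Fin S.card) := Finset.univ.filter fun i => g i ≠ 0
    have hT : T.Nonempty := by
      obtain ⟨i, hi⟩ := hne
      exact ⟨i, Finset.mem_filter.2 ⟨Finset.mem_univ _, hi⟩⟩
    let w : Fin S.card → ℕ := fun i => n * (g i).natDegree + o i
    have hw : ∀ i, g i ≠ 0 → WeylAux.E (Polynomial.aeval P (g i) * b i) (w i) := fun i hi =>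
      (WeylAux.E.aeval hn hPE hi).mul (hbE i)
    obtain ⟨i, hiT, himax⟩ := T.exists_max_image w hT
    have hi0 : g i ≠ 0 := (Finset.mem_filter.1 hiT).2
    obtain ⟨l, hl, hil⟩ := hw i hi0
    have := congrArg (WeylAux.ad ^ (w i)) hg
    rw [map_zero, map_sum, Finset.sum_eq_single i] at this
    · rw [hil] at this
      exact hl ((smul_eq_zero.1 this).resolve_right one_ne_zero)
    · intro j _ hji
      by_cases hj : g j = 0
      · rw [hj, map_zero, zero_mul, map_zero]
      · apply (hw j hj).zero_of_lt
        refine lt_of_le_of_ne (himax j (Finset.mem_filter.2 ⟨Finset.mem_univ _, hj⟩)) ?_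
        intro h
        apply hji
        apply hinj
        have := congrArg (· % n) h
        simpa [w, Nat.mul_add_mod] using this
    · simp

end
end

section
/- Let k be a field and let p ∈ k[y] be a polynomial of degree strictly greater than 1. If f, g ∈ k[y] satisfy f(y)·g(p(y)) = f(p(y))·g(y) (i.e., f · (g ∘ p) = (f ∘ p) · g) and g ≠ 0, then there exists a scalar α ∈ k such that f = α·g. -/
/-- If `p ∈ k[y]` has degree `> 1` and `f, g ∈ k[y]` satisfy
`f(y)·g(p(y)) = f(p(y))·g(y)` with `g ≠ 0`, then `f = α·g` for some scalar `α ∈ k`. -/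
theorem proportional_of_comp_identity {k : Type*} [Field k]
    (p f g : Polynomial k) (hp : 1 < p.degree) (hg : g ≠ 0)
    (h : f * g.comp p = f.comp p * g) :
    ∃ α : k, f = Polynomial.C α * g := by
  have hd : 1 < p.natDegree := by
    by_contra hc
    exact absurd (Polynomial.degree_le_of_natDegree_le (not_lt.mp hc)) (not_le.mpr (by exact_mod_cast hp))
  have hne : ∀ q : Polynomial k, q ≠ 0 → q.comp p ≠ 0 := by
    intro q hq h0
    rw [← Polynomial.leadingCoeff_eq_zero, Polynomial.leadingCoeff_comp (by omega)] at h0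
    rcases mul_eq_zero.mp h0 with h1 | h1
    · exact hq (Polynomial.leadingCoeff_eq_zero.mp h1)
    · have h2 := Polynomial.leadingCoeff_eq_zero.mp (eq_zero_of_pow_eq_zero h1)
      simp [h2] at hd
  refine ⟨f.coeff g.natDegree / g.leadingCoeff, ?_⟩
  set α := f.coeff g.natDegree / g.leadingCoeff with hα
  by_contra hfg
  set r := f - Polynomial.C α * g with hr
  have hr0 : r ≠ 0 := fun h0 => hfg (sub_eq_zero.mp h0)
  have hid : r * g.comp p = r.comp p * g := by
    rw [hr, Polynomial.sub_comp, Polynomial.mul_comp, Polynomial.C_comp]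
    linear_combination h
  have hdeg := congrArg Polynomial.natDegree hid
  rw [Polynomial.natDegree_mul hr0 (hne g hg), Polynomial.natDegree_mul (hne r hr0) hg,
    Polynomial.natDegree_comp, Polynomial.natDegree_comp] at hdeg
  have heq : r.natDegree = g.natDegree := by
    obtain ⟨d, hd'⟩ := Nat.exists_eq_add_of_lt hd
    rw [hd'] at hdeg
    have : r.natDegree * (d + 1) = g.natDegree * (d + 1) := by linarith
    exact Nat.eq_of_mul_eq_mul_right (Nat.succ_pos d) this
  apply hr0
  rw [← Polynomial.leadingCoeff_eq_zero, Polynomial.leadingCoeff, heq, hr,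
    Polynomial.coeff_sub, Polynomial.coeff_C_mul, Polynomial.coeff_natDegree, hα,
    div_mul_cancel₀ _ (Polynomial.leadingCoeff_ne_zero.mpr hg), sub_self]
end

section
/- Let k be a field, let p ∈ k[y] have degree strictly greater than 1, and let σ denote the map k[y] → k[y], f ↦ f ∘ p (composition with p), so that σ^j(f) = f ∘ p ∘ ⋯ ∘ p (j-fold composite). Let n ≥ 1 and m ≥ 0 be integers and let a, b, c ∈ k[y] be nonzero polynomials satisfying a·σ^n(b) = b·σ^m(a) and a·σ^n(c) = c·σ^m(a). Then there exists a scalar α ∈ k such that b = α·c. -/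
theorem iter_comp_aux {k : Type*} [Field k] (p : Polynomial k) (j : ℕ) :
    ∃ q : Polynomial k, q.natDegree = p.natDegree ^ j ∧
      ∀ f, (fun f : Polynomial k => f.comp p)^[j] f = f.comp q := by
  induction j with
  | zero => exact ⟨Polynomial.X, by simp, by simp⟩
  | succ j ih =>
    obtain ⟨q, hq, h⟩ := ih
    refine ⟨q.comp p, by rw [Polynomial.natDegree_comp, hq, pow_succ], fun f => ?_⟩
    rw [Function.iterate_succ_apply', h, Polynomial.comp_assoc]

theorem natDegree_zero_aux {k : Type*} [Field k] {q u v : Polynomial k}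
    (hq : 1 < q.natDegree) (hu : u ≠ 0) (huv : IsCoprime u v)
    (h : u.comp q * v = u * v.comp q) : u.natDegree = 0 := by
  have hc : IsCoprime (u.comp q) (v.comp q) := by
    have := huv.map (Polynomial.compRingHom q)
    simpa using this
  have hd : u.comp q ∣ u := hc.dvd_of_dvd_mul_right (Dvd.intro _ h)
  have hle := Polynomial.natDegree_le_of_dvd hd hu
  rw [Polynomial.natDegree_comp] at hle
  by_contra h0
  have : 0 < u.natDegree := Nat.pos_of_ne_zero h0
  nlinarith

/-- Let `σ : k[y] → k[y]` be composition with a polynomial `p` of degree `> 1`.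
If nonzero polynomials `a, b, c` satisfy the leading-coefficient relations
`a·σ^n(b) = b·σ^m(a)` and `a·σ^n(c) = c·σ^m(a)` with `n ≥ 1`, then `b = α·c`
for some scalar `α ∈ k`. -/
theorem proportional_of_leading_coeff_relations {k : Type*} [Field k]
    (p : Polynomial k) (hp : 1 < p.degree) (n m : ℕ) (hn : 1 ≤ n)
    (a b c : Polynomial k) (ha : a ≠ 0) (hb : b ≠ 0) (hc : c ≠ 0)
    (h1 : a * (fun f : Polynomial k => f.comp p)^[n] b
        = b * (fun f : Polynomial k => f.comp p)^[m] a)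
    (h2 : a * (fun f : Polynomial k => f.comp p)^[n] c
        = c * (fun f : Polynomial k => f.comp p)^[m] a) :
    ∃ α : k, b = Polynomial.C α * c := by
  have hp' : 1 < p.natDegree := by
    have := Polynomial.natDegree_lt_natDegree (p := (Polynomial.X : Polynomial k)) (q := p) Polynomial.X_ne_zero
      (by rwa [Polynomial.degree_X])
    simpa using this
  have hcomp : ∀ {f q : Polynomial k}, f ≠ 0 → 0 < q.natDegree → f.comp q ≠ 0 := by
    intro f q hf hq h
    rw [Polynomial.comp_eq_zero_iff] at h
    rcases h with h | ⟨_, h⟩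
    · exact hf h
    · rw [h] at hq
      simp at hq
  obtain ⟨q, hq, hn'⟩ := iter_comp_aux p n
  obtain ⟨r, hr, hm'⟩ := iter_comp_aux p m
  rw [hn', hm'] at h1 h2
  have hq1 : 1 < q.natDegree := by rw [hq]; exact Nat.one_lt_pow (by omega) hp'
  have hr0 : 0 < r.natDegree := by rw [hr]; exact Nat.pow_pos (by omega)
  have har := hcomp ha hr0
  have key : b.comp q * c = b * c.comp q := by
    apply mul_left_cancel₀ (mul_ne_zero ha har)
    linear_combination (c * a.comp r) * h1 - (b * a.comp r) * h2
  classical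
  obtain ⟨u, v, g, huv, hbu, hcv⟩ : ∃ u v g : Polynomial k, IsCoprime u v ∧ b = g * u ∧ c = g * v := by
    have hg : EuclideanDomain.gcd b c ≠ 0 := fun h => hb (EuclideanDomain.gcd_eq_zero_iff.1 h).1
    obtain ⟨u, hu⟩ := EuclideanDomain.gcd_dvd_left b c
    obtain ⟨v, hv⟩ := EuclideanDomain.gcd_dvd_right b c
    refine ⟨u, v, _, ⟨EuclideanDomain.gcdA b c, EuclideanDomain.gcdB b c, ?_⟩, hu, hv⟩
    apply mul_left_cancel₀ hg
    have := EuclideanDomain.gcd_eq_gcd_ab b c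
    linear_combination (-EuclideanDomain.gcdA b c) * hu - EuclideanDomain.gcdB b c * hv - this
  subst hbu hcv
  have hg : g ≠ 0 := left_ne_zero_of_mul hb
  have hu := right_ne_zero_of_mul hb
  have hv := right_ne_zero_of_mul hc
  have key2 : u.comp q * v = u * v.comp q := by
    apply mul_left_cancel₀ (mul_ne_zero hg (hcomp hg (q := q) (by omega)))
    simp only [Polynomial.mul_comp] at key
    linear_combination key
  have hu0 := natDegree_zero_aux hq1 hu huv key2
  have hv0 := natDegree_zero_aux hq1 hv huv.symm (by linear_combination -key2)
  obtain ⟨x, rfl⟩ := Polynomial.natDegree_eq_zero.1 hu0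
  obtain ⟨z, rfl⟩ := Polynomial.natDegree_eq_zero.1 hv0
  have hz : z ≠ 0 := by rintro rfl; simp at hv
  refine ⟨x / z, ?_⟩
  have : Polynomial.C x = Polynomial.C (x / z) * Polynomial.C z := by
    rw [← Polynomial.C_mul, div_mul_cancel₀ _ hz]
  rw [this]; ring
end
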